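/- Let n ≥ 6 be divisible by 6, let s ∈ ℝ^n be a profile in the unit-length model, and let ℓ = o_{n/3}(s), m = o_{n/2}(s), r = o_{2n/3}(s). If c ∈ ℝ is a position whose covering interval has empty intersection with both the interval of the (n/3)-th agent and the interval of the (2n/3)-th agent, i.e., |c − ℓ| ≥ 1 and |c − r| ≥ 1, then (1/3)·(SC_s(ℓ) + SC_s(m) + SC_s(r)) ≤ (3/2) · SC_s(c). In particular, if the optimal covering interval intersects neither of these two agents' intervals, the Uniform-Statistic mechanism is at most 3/2-approximate on that instance. -/

import Mathlib

/-- The `k`-th ordered statistic (0-indexed) of a profile `s` of left endpoints. -/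
noncomputable def oStat {n : ℕ} (s : Fin n → ℝ) (k : Fin n) : ℝ :=
  s (Tuple.sort s k)

/-!
An agent whose left endpoint is at distance at least `1` from `c` pays the full cost `1` at `c`.
If `c` is at distance at least `1` from both `ℓ` and `r`, it lies to the right of `r`, to the left
of `ℓ`, or between the two, and each time at least `2n/3` agents pay in full: those up to `r`, those
from `ℓ` on, or those up to `ℓ` together with those from `r` on. Since no position costs more than
`n`, every position is within a factor `3/2` of `c`.
-/

section SocialCost

variable {ι : Type*} [Fintype ι] (s : ι → ℝ) (c : ℝ)

/-- The social cost `SC_s(c)` of the covering interval `[c, c + 1]` when the agents, indexed by an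
arbitrary finite type, have left endpoints `s`. -/
noncomputable def socialCost : ℝ :=
  ∑ i, min 1 |c - s i|

theorem socialCost_le_card : socialCost s c ≤ Fintype.card ι := by
  simpa [socialCost] using
    Finset.sum_le_card_nsmul Finset.univ (fun i ↦ min 1 |c - s i|) 1 fun _ _ ↦ min_le_left _ _

theorem card_filter_one_le_abs_sub_le_socialCost :
    (Finset.card {i | 1 ≤ |c - s i|} : ℝ) ≤ socialCost s c := by
  rw [Finset.natCast_card_filter]
  refine Finset.sum_le_sum fun i _ ↦ ?_
  split_ifs with h_far
  · exact le_min le_rfl h_far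
  · positivity

theorem card_filter_le_add_card_filter_ge_le_socialCost :
    (Finset.card {i | s i ≤ c - 1} + Finset.card {i | c + 1 ≤ s i} : ℝ) ≤ socialCost s c := by
  classical
  have h_disj : Disjoint (Finset.univ.filter fun i ↦ s i ≤ c - 1)
      (Finset.univ.filter fun i ↦ c + 1 ≤ s i) :=
    Finset.disjoint_filter.2 fun i _ h_left h_right ↦ by linarith
  refine le_trans ?_ (card_filter_one_le_abs_sub_le_socialCost s c)
  rw [← Nat.cast_add, ← Finset.card_union_of_disjoint h_disj, ← Finset.filter_or]
  gcongr with i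
  rintro (h_left | h_right)
  · exact le_abs.2 (.inl (by linarith))
  · exact le_abs.2 (.inr (by linarith))

end SocialCost

section OrderStatistics

variable {n : ℕ} {s : Fin n → ℝ} {c x : ℝ} {a b k : Fin n}

theorem oStat_monotone (s : Fin n → ℝ) : Monotone (oStat s) :=
  Tuple.monotone_sort s

theorem succ_le_card_filter_le_of_oStat_le (h : oStat s k ≤ x) :
    (k : ℕ) + 1 ≤ Finset.card {i | s i ≤ x} := by
  rw [← Fin.card_Iic]
  refine Finset.card_le_card_of_injOn (Tuple.sort s) (fun j hj ↦ ?_) (Equiv.injective _).injOn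
  simpa [oStat] using (oStat_monotone s (Finset.mem_Iic.1 hj)).trans h

theorem sub_le_card_filter_ge_of_le_oStat (h : x ≤ oStat s k) :
    n - (k : ℕ) ≤ Finset.card {i | x ≤ s i} := by
  rw [← Fin.card_Ici]
  refine Finset.card_le_card_of_injOn (Tuple.sort s) (fun j hj ↦ ?_) (Equiv.injective _).injOn
  simpa [oStat] using h.trans (oStat_monotone s (Finset.mem_Ici.1 hj))

theorem min_le_socialCost_of_one_le_abs_sub_oStat
    (ha : 1 ≤ |c - oStat s a|) (hb : 1 ≤ |c - oStat s b|) :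
    ((min (b + 1) (min (n - a) (a + 1 + (n - b))) : ℕ) : ℝ) ≤ socialCost s c := by
  refine le_trans ?_ (card_filter_le_add_card_filter_ge_le_socialCost s c)
  norm_cast
  rcases le_abs.1 hb with hb_left | hb_right
  · have h_left := succ_le_card_filter_le_of_oStat_le (s := s) (x := c - 1) (by linarith)
    omega
  have h_right_b := sub_le_card_filter_ge_of_le_oStat (s := s) (x := c + 1) (k := b) (by linarith)
  rcases le_abs.1 ha with ha_left | ha_right
  · have h_left := succ_le_card_filter_le_of_oStat_le (s := s) (x := c - 1) (k := a) (by linarith)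
    omega
  · have h_right_a := sub_le_card_filter_ge_of_le_oStat (s := s) (x := c + 1) (k := a) (by linarith)
    omega

theorem uniform_statistic_no_intersection_general (hn : 0 < n) (hd : 3 ∣ n)
    (hl : 1 ≤ |c - oStat s ⟨n / 3 - 1, by omega⟩|)
    (hr : 1 ≤ |c - oStat s ⟨2 * n / 3 - 1, by omega⟩|) (x : ℝ) :
    socialCost s x ≤ 3 / 2 * socialCost s c := by
  have h_lower := min_le_socialCost_of_one_le_abs_sub_oStat hl hr
  have h_upper : socialCost s x ≤ n := by simpa using socialCost_le_card s x
  obtain ⟨k, rfl⟩ := hd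
  have h_two_thirds : (2 * k : ℝ) ≤ socialCost s c := by
    refine le_trans ?_ h_lower
    norm_cast
    simp only [le_min_iff]
    omega
  push_cast at h_upper
  linarith

end OrderStatistics

/-- If a position `c` is such that the covering interval `[c, c+1]` has empty
intersection with both the interval of the `(n/3)`-th agent and the interval of the
`(2n/3)`-th agent (i.e. `|c - ℓ| ≥ 1` and `|c - r| ≥ 1`), then the expected social
cost of the Uniform-Statistic mechanism is at most `3/2` times the social cost of
`c`. -/
theorem uniform_statistic_no_intersection (n : ℕ) (hn : 6 ≤ n) (hd : 6 ∣ n)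
    (s : Fin n → ℝ) (c : ℝ)
    (hl : 1 ≤ |c - oStat s ⟨n / 3 - 1, by omega⟩|)
    (hr : 1 ≤ |c - oStat s ⟨2 * n / 3 - 1, by omega⟩|) :
    (1 / 3 : ℝ) *
        ((∑ i, min 1 |oStat s ⟨n / 3 - 1, by omega⟩ - s i|) +
          (∑ i, min 1 |oStat s ⟨n / 2 - 1, by omega⟩ - s i|) +
          (∑ i, min 1 |oStat s ⟨2 * n / 3 - 1, by omega⟩ - s i|)) ≤
      (3 / 2 : ℝ) * ∑ i, min 1 |c - s i| := by
  have h_cost (x : ℝ) : ∑ i, min 1 |x - s i| ≤ 3 / 2 * ∑ i, min 1 |c - s i| :=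
    uniform_statistic_no_intersection_general (by omega) (by omega) hl hr x
  linarith [h_cost (oStat s ⟨n / 3 - 1, by omega⟩), h_cost (oStat s ⟨n / 2 - 1, by omega⟩),
    h_cost (oStat s ⟨2 * n / 3 - 1, by omega⟩)]
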